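/- Suppose 1/3 < α ≤ 1. Let T ⊆ V, let k ∈ ℕ with k' := k − |T| ≥ 1, let t be a real number, and set t' := t − val(T). Suppose every vertex w ∈ V∖T satisfies contribution(w, T) < t'/k' + (3α−1)·(k−1), and let v ∈ V∖T be a vertex satisfying contribution(v, T) < t'/k' − (3α−1)·(k−1)². Then there is no set S with T ⊆ S ⊆ V, |S| = k, v ∈ S and val(S) ≥ t. -/

import Mathlib

open Finset

variable {V : Type*} [Fintype V] [DecidableEq V]

/-- Number of edges of `G` with both endpoints in `S`. -/
def mIn (G : SimpleGraph V) [DecidableRel G.Adj] (S : Finset V) : ℕ :=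
  (G.edgeFinset.filter (fun e => ∀ v ∈ e, v ∈ S)).card

/-- Number of edges of `G` with exactly one endpoint in `S`. -/
def mCut (G : SimpleGraph V) [DecidableRel G.Adj] (S : Finset V) : ℕ :=
  (G.edgeFinset.filter (fun e => (∃ v ∈ e, v ∈ S) ∧ ∃ v ∈ e, v ∉ S)).card

/-- `val(S) = α·(m(S, V∖S) + counter(S)) + (1−α)·m(S)`. -/
noncomputable def val (G : SimpleGraph V) [DecidableRel G.Adj] (counter : V → ℕ) (α : ℝ)
    (S : Finset V) : ℝ :=
  α * ((mCut G S : ℝ) + ∑ v ∈ S, (counter v : ℝ)) + (1 - α) * (mIn G S : ℝ)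

/-- `degc(v) = deg(v) + counter(v)`. -/
def degc (G : SimpleGraph V) [DecidableRel G.Adj] (counter : V → ℕ) (v : V) : ℕ :=
  G.degree v + counter v

/-- `contribution(v, T) = α·degc(v) + (1−3α)·|N(v) ∩ T|`. -/
noncomputable def contribution (G : SimpleGraph V) [DecidableRel G.Adj] (counter : V → ℕ)
    (α : ℝ) (v : V) (T : Finset V) : ℝ :=
  α * (degc G counter v : ℝ) + (1 - 3 * α) * ((G.neighborFinset v ∩ T).card : ℝ)

/-!
Adding a vertex `w` to a set `A` changes `val` by exactly `contribution(w, A)`, and for `α ≥ 1/3`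
this gain only shrinks as `A` grows: `val` is submodular. Hence
`val(S) ≤ val(T) + ∑_{w ∈ S ∖ T} contribution(w, T)` whenever `T ⊆ S`. To reach `t`, the `k'`
contributions on the right must average at least `t'/k'`, so if none of them exceeds this average
by more than `b`, none can fall below it by more than `(k' - 1) * b`.
-/

section Averaging

variable {ι M : Type*} [DecidableEq ι] [AddCommMonoid M] [PartialOrder M]
  [IsOrderedCancelAddMonoid M]

theorem sum_lt_card_nsmul_of_add_card_erase_nsmul_lt {s : Finset ι} {f : ι → M} {c b : M} {i : ι}
    (hi : i ∈ s) (hle : ∀ j ∈ s.erase i, f j ≤ c + b)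
    (hlt : f i + #(s.erase i) • b < c) : ∑ j ∈ s, f j < #s • c :=
  calc ∑ j ∈ s, f j = f i + ∑ j ∈ s.erase i, f j := (add_sum_erase s f hi).symm
    _ ≤ f i + #(s.erase i) • (c + b) := by gcongr; exact sum_le_card_nsmul _ _ _ hle
    _ = (f i + #(s.erase i) • b) + #(s.erase i) • c := by rw [nsmul_add]; abel
    _ < c + #(s.erase i) • c := by gcongr
    _ = #s • c := by rw [← succ_nsmul', card_erase_add_one hi]

end Averaging

theorem sub_sub_one_mul_mul_le {R : Type*} [CommRing R] [PartialOrder R] [IsOrderedRing R]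
    {a m x : R} (ha : 0 ≤ a) (hm : 0 ≤ m) (hx : 1 ≤ x) :
    (x - m - 1) * (a * (x - 1)) ≤ a * (x - 1) ^ 2 :=
  calc (x - m - 1) * (a * (x - 1)) ≤ (x - 1) * (a * (x - 1)) :=
        mul_le_mul_of_nonneg_right (sub_le_sub_right (sub_le_self x hm) 1)
          (mul_nonneg ha (sub_nonneg.mpr hx))
    _ = a * (x - 1) ^ 2 := by ring

theorem card_filter_mem_sym2 {e : Sym2 V} (he : ¬ e.IsDiag) (S : Finset V) :
    #{v ∈ S | v ∈ e} = (if (∃ v ∈ e, v ∈ S) ∧ ∃ v ∈ e, v ∉ S then 1 else 0) +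
      2 * (if ∀ v ∈ e, v ∈ S then 1 else 0) := by
  induction e with
  | _ x y =>
    have hxy : x ≠ y := he
    have hfilter : {v ∈ S | v ∈ s(x, y)} = ({x, y} : Finset V).filter (· ∈ S) := by
      ext v
      simp [and_comm]
    rw [hfilter, filter_insert, filter_singleton]
    by_cases hx : x ∈ S <;> by_cases hy : y ∈ S <;> simp [hx, hy, hxy]

section EdgeCounts

variable (G : SimpleGraph V) [DecidableRel G.Adj]

theorem mCut_add_two_mul_mIn (S : Finset V) :
    mCut G S + 2 * mIn G S = ∑ v ∈ S, G.degree v := by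
  symm
  calc ∑ v ∈ S, G.degree v = ∑ v ∈ S, #{e ∈ G.edgeFinset | v ∈ e} := by
        simp only [← G.card_incidenceFinset_eq_degree, G.incidenceFinset_eq_filter]
    _ = ∑ e ∈ G.edgeFinset, #{v ∈ S | v ∈ e} :=
        sum_card_bipartiteAbove_eq_sum_card_bipartiteBelow _
    _ = ∑ e ∈ G.edgeFinset, ((if (∃ v ∈ e, v ∈ S) ∧ ∃ v ∈ e, v ∉ S then 1 else 0) +
          2 * (if ∀ v ∈ e, v ∈ S then 1 else 0)) :=
        sum_congr rfl fun e he ↦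
          card_filter_mem_sym2 (G.not_isDiag_of_mem_edgeFinset he) S
    _ = mCut G S + 2 * mIn G S := by
        rw [sum_add_distrib, ← mul_sum, mCut, mIn, card_filter, card_filter]

theorem filter_edgeFinset_forall_mem_insert (w : V) (A : Finset V) :
    {e ∈ G.edgeFinset | ∀ v ∈ e, v ∈ insert w A} =
      {e ∈ G.edgeFinset | ∀ v ∈ e, v ∈ A} ∪ (G.neighborFinset w ∩ A).image (s(w, ·)) := by
  ext e
  induction e with
  | _ x y =>
    simp only [mem_filter, mem_union, mem_image, mem_inter, SimpleGraph.mem_neighborFinset,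
      SimpleGraph.mem_edgeFinset, SimpleGraph.mem_edgeSet, Sym2.mem_iff, forall_eq_or_imp,
      forall_eq, mem_insert]
    constructor
    · rintro ⟨hxy, rfl | hx, rfl | hy⟩
      · exact absurd rfl hxy.ne
      · exact .inr ⟨y, ⟨hxy, hy⟩, rfl⟩
      · exact .inr ⟨x, ⟨hxy.symm, hx⟩, Sym2.eq_swap⟩
      · exact .inl ⟨hxy, hx, hy⟩
    · rintro (⟨hxy, hx, hy⟩ | ⟨u, ⟨hwu, hu⟩, he⟩)
      · exact ⟨hxy, .inr hx, .inr hy⟩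
      · rcases Sym2.eq_iff.mp he with ⟨rfl, rfl⟩ | ⟨rfl, rfl⟩
        · exact ⟨hwu, .inl rfl, .inr hu⟩
        · exact ⟨hwu.symm, .inr hu, .inl rfl⟩

theorem mIn_insert {w : V} {A : Finset V} (hw : w ∉ A) :
    mIn G (insert w A) = mIn G A + #(G.neighborFinset w ∩ A) := by
  have hdisj : Disjoint {e ∈ G.edgeFinset | ∀ v ∈ e, v ∈ A}
      ((G.neighborFinset w ∩ A).image (s(w, ·))) := by
    rw [disjoint_right]
    intro e he he'
    obtain ⟨u, -, rfl⟩ := mem_image.mp he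
    exact hw ((mem_filter.mp he').2 w (Sym2.mem_mk_left w u))
  rw [mIn, filter_edgeFinset_forall_mem_insert, card_union_of_disjoint hdisj,
    card_image_of_injective _ fun _ _ h ↦ Sym2.congr_right.mp h, mIn]

end EdgeCounts

section Val

variable (G : SimpleGraph V) [DecidableRel G.Adj] (counter : V → ℕ) (α : ℝ)

theorem val_eq_sum_degc_add_mIn (S : Finset V) :
    val G counter α S = α * ∑ v ∈ S, (degc G counter v : ℝ) + (1 - 3 * α) * (mIn G S : ℝ) := by
  have hdeg : (mCut G S : ℝ) + 2 * mIn G S = ∑ v ∈ S, (G.degree v : ℝ) := by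
    exact_mod_cast mCut_add_two_mul_mIn G S
  simp only [_root_.val, degc, Nat.cast_add, sum_add_distrib, ← hdeg]
  ring

theorem val_insert {w : V} {A : Finset V} (hw : w ∉ A) :
    val G counter α (insert w A) = val G counter α A + contribution G counter α w A := by
  rw [val_eq_sum_degc_add_mIn, val_eq_sum_degc_add_mIn, contribution, sum_insert hw,
    mIn_insert G hw, Nat.cast_add]
  ring

variable {α}

theorem contribution_antitone (hα : 1 / 3 ≤ α) (w : V) : Antitone (contribution G counter α w) := by
  intro A B hAB
  have hcoeff : 1 - 3 * α ≤ 0 := by linarith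
  have hcard : (#(G.neighborFinset w ∩ A) : ℝ) ≤ #(G.neighborFinset w ∩ B) := by
    exact_mod_cast card_le_card (inter_subset_inter_left hAB)
  exact add_le_add_right (mul_le_mul_of_nonpos_left hcard hcoeff) _

theorem val_union_le (hα : 1 / 3 ≤ α) {T B : Finset V} (hTB : Disjoint T B) :
    val G counter α (T ∪ B) ≤ val G counter α T + ∑ w ∈ B, contribution G counter α w T := by
  induction B using Finset.induction_on with
  | empty => simp
  | insert w B hwB ih =>
    obtain ⟨hwT, hTB⟩ := disjoint_insert_right.mp hTB
    calc val G counter α (T ∪ insert w B)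
        = val G counter α (T ∪ B) + contribution G counter α w (T ∪ B) := by
          rw [union_insert, val_insert G counter α (by simp [hwT, hwB])]
      _ ≤ (val G counter α T + ∑ u ∈ B, contribution G counter α u T) +
            contribution G counter α w T :=
          add_le_add (ih hTB) (contribution_antitone G counter hα w subset_union_left)
      _ = val G counter α T + ∑ u ∈ insert w B, contribution G counter α u T := by
          rw [sum_insert hwB]
          ring

theorem needless_vertex_exclusion_general (hα : 1 / 3 ≤ α) {T : Finset V} {k : ℕ} {t b : ℝ}
    (hTk : #T < k)
    (hall : ∀ w ∉ T, contribution G counter α w T ≤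
      (t - val G counter α T) / ((k : ℝ) - #T) + b)
    {v : V} (hvT : v ∉ T)
    (hv : contribution G counter α v T <
      (t - val G counter α T) / ((k : ℝ) - #T) - ((k : ℝ) - #T - 1) * b) :
    ¬ ∃ S : Finset V, T ⊆ S ∧ #S = k ∧ v ∈ S ∧ val G counter α S ≥ t := by
  rintro ⟨S, hTS, rfl, hvS, htS⟩
  have hvST : v ∈ S \ T := mem_sdiff.mpr ⟨hvS, hvT⟩
  have hcard : (#(S \ T) : ℝ) = #S - #T := cast_card_sdiff hTS
  have hcard_erase : (#((S \ T).erase v) : ℝ) = #S - #T - 1 := by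
    rw [cast_card_erase_of_mem hvST, hcard]
  have hpos : (0 : ℝ) < #S - #T := sub_pos.mpr (by exact_mod_cast hTk)
  have hsum : ∑ w ∈ S \ T, contribution G counter α w T < t - val G counter α T :=
    calc ∑ w ∈ S \ T, contribution G counter α w T
        < #(S \ T) • ((t - val G counter α T) / ((#S : ℝ) - #T)) := by
          refine sum_lt_card_nsmul_of_add_card_erase_nsmul_lt hvST
            (fun w hw ↦ hall w (mem_sdiff.mp (mem_of_mem_erase hw)).2) ?_
          rw [nsmul_eq_mul, hcard_erase]
          exact lt_sub_iff_add_lt.mp hv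
      _ = t - val G counter α T := by rw [nsmul_eq_mul, hcard, mul_div_cancel₀ _ hpos.ne']
  have hval : val G counter α S ≤
      val G counter α T + ∑ w ∈ S \ T, contribution G counter α w T := by
    simpa only [union_sdiff_of_subset hTS] using
      val_union_le G counter hα (disjoint_sdiff (s := T) (t := S))
  linarith

end Val

/-- Exclusion of a needless vertex: for `1/3 < α ≤ 1`, if every vertex outside `T`
has contribution `< t'/k' + (3α−1)(k−1)` and `v ∉ T` has contribution
`< t'/k' − (3α−1)(k−1)²`, then no solution contains `v`. -/
theorem needless_vertex_exclusion (G : SimpleGraph V) [DecidableRel G.Adj]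
    (counter : V → ℕ) (α : ℝ) (hα1 : 1 / 3 < α) (hα2 : α ≤ 1)
    (T : Finset V) (k : ℕ) (t : ℝ) (hTk : T.card < k)
    (hall : ∀ w : V, w ∉ T →
      contribution G counter α w T <
        (t - val G counter α T) / ((k : ℝ) - T.card) + (3 * α - 1) * ((k : ℝ) - 1))
    (v : V) (hvT : v ∉ T)
    (hv : contribution G counter α v T <
      (t - val G counter α T) / ((k : ℝ) - T.card) - (3 * α - 1) * ((k : ℝ) - 1) ^ 2) :
    ¬ ∃ S : Finset V, T ⊆ S ∧ S.card = k ∧ v ∈ S ∧ val G counter α S ≥ t :=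
  needless_vertex_exclusion_general G counter hα1.le hTk (fun w hw ↦ (hall w hw).le) hvT
    (hv.trans_le (sub_le_sub_left (sub_sub_one_mul_mul_le (by linarith) (#T).cast_nonneg
      (Nat.one_le_cast.mpr (Nat.zero_lt_of_lt hTk))) _))
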